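/- arXiv:1612.01732 — 2 statements merged into one kernel-verified Lean document; each statement's English description precedes it below -/
import Mathlib

section
/- Let Λ be a finite simple graph that is not a linear forest. Then there exists a finite simple graph Γ such that there is an injective group homomorphism from G(Λ) into G(Γ), but Λ does not embed into Γ as a full (induced) subgraph. -/
open SimpleGraph

/-- The set of commutator relations of a graph: one commutator for each edge. -/
def raagRels {V : Type} (G : SimpleGraph V) : Set (FreeGroup V) :=
  {r | ∃ u v : V, G.Adj u v ∧
    r = FreeGroup.of u * FreeGroup.of v * (FreeGroup.of u)⁻¹ * (FreeGroup.of v)⁻¹}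

/-- The right-angled Artin group `A(G)` of a graph `G`. -/
abbrev RAAG {V : Type} (G : SimpleGraph V) : Type := PresentedGroup (raagRels G)

/-- `G(Γ) = A(Γᶜ)`, the RAAG on the complement graph. -/
abbrev GG {V : Type} (G : SimpleGraph V) : Type := RAAG Gᶜ

/-- A linear forest: an acyclic graph all of whose vertices have degree at most 2. -/
def IsLinearForest {V : Type} (G : SimpleGraph V) : Prop :=
  G.IsAcyclic ∧ ∀ v : V, (G.neighborSet v).ncard ≤ 2

/-- The star of a vertex: the vertex together with its neighbours. -/
def starSet {V : Type} (G : SimpleGraph V) (v : V) : Set V :=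
  insert v (G.neighborSet v)

/-- The double `D_v(G)` of `G` along the star of `v`: original vertices together with
copies of the vertices outside the star. -/
def GraphDouble {V : Type} (G : SimpleGraph V) (v : V) :
    SimpleGraph (V ⊕ {w : V // w ∉ starSet G v}) :=
  SimpleGraph.fromRel (fun x y =>
    match x, y with
    | Sum.inl a, Sum.inl b => G.Adj a b
    | Sum.inr a, Sum.inr b => G.Adj a.1 b.1
    | Sum.inl a, Sum.inr b => a ∈ starSet G v ∧ G.Adj a b.1
    | Sum.inr _, Sum.inl _ => False)

/-- Subdivision of the edge `[v,w]` of `Λ`, with `none` as the new vertex. -/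
def SubdivEdge {V : Type} (Λ : SimpleGraph V) (v w : V) : SimpleGraph (Option V) :=
  SimpleGraph.fromRel (fun x y =>
    match x, y with
    | some a, some b => Λ.Adj a b ∧ ¬((a = v ∧ b = w) ∨ (a = w ∧ b = v))
    | some a, none => a = v ∨ a = w
    | none, some _ => False
    | none, none => False)

/-- The graph `Λ_u⁻(w₁,w₂)`, with `none` as the new vertex `v`. -/
def MinusGraph {V : Type} (Λ : SimpleGraph V) (u w₁ w₂ : V) : SimpleGraph (Option V) :=
  SimpleGraph.fromRel (fun x y =>
    match x, y with
    | some a, some b => Λ.Adj a b ∧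
        ¬((a = u ∧ b = w₁) ∨ (a = w₁ ∧ b = u) ∨ (a = u ∧ b = w₂) ∨ (a = w₂ ∧ b = u))
    | some a, none => a = w₁ ∨ a = u ∨ a = w₂
    | none, some _ => False
    | none, none => False)

/-- The graph `Λ_u⁺(w₁,w₂)`: `Λ_u⁻(w₁,w₂)` with the edge `[u,w₂]` added back. -/
def PlusGraph {V : Type} (Λ : SimpleGraph V) (u w₁ w₂ : V) : SimpleGraph (Option V) :=
  SimpleGraph.fromRel (fun x y =>
    (MinusGraph Λ u w₁ w₂).Adj x y ∨ (x = some u ∧ y = some w₂))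

/-!
Let `Γ` be obtained from `Λ` by splitting a vertex `o` into an edge `[a, b]` whose contraction
gives back `Λ`. The generators other than `o`, together with `b⁻¹ a b` in place of `o`, define a
map `G(Λ) → G(Γ)`. It is injective: `G(Γ)` acts on two copies of `G(Λ)`, with `b` exchanging the
copies and `a` acting only on the second, so that `b⁻¹ a b` acts as `o` on the first copy.

It remains to split `Λ` so that it does not embed into the result.

* If `Λ` has a cycle, subdivide an edge of its 2-core. An embedding of `Λ` misses exactly one
  vertex of the subdivision. This vertex lies in the 2-core of the subdivision, which is too large
  to be the image of a subset of the 2-core of `Λ`; hence at least two edges are missed as well,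
  but subdividing creates only one.
* If `Λ` is acyclic with a vertex `o` of degree `d ≥ 3`, split `o` so that `a` has degree `d` and
  `b` has degree three, but both have adjacent neighbours. Neither is then the centre of an induced
  `d`-star and no other vertex becomes one, so there are fewer such centres than in `Λ`.
-/

open scoped commutatorElement

namespace GG

variable {V : Type} {G : SimpleGraph V} {H : Type*} [Group H]

theorem commute_of {u v : V} (h : ¬G.Adj u v) :
    Commute (PresentedGroup.of u : GG G) (PresentedGroup.of v) := by
  obtain rfl | huv := eq_or_ne u v
  · exact Commute.refl _
  · have hrel : PresentedGroup.mk (raagRels Gᶜ) ⁅FreeGroup.of u, FreeGroup.of v⁆ = 1 :=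
      PresentedGroup.one_of_mem ⟨u, v, (G.compl_adj u v).2 ⟨huv, h⟩, rfl⟩
    rwa [map_commutatorElement, commutatorElement_eq_one_iff_commute] at hrel

theorem lift_eq_one_of_mem_raagRels {f : V → H} (hf : ∀ u v, Gᶜ.Adj u v → Commute (f u) (f v)) :
    ∀ r ∈ raagRels Gᶜ, FreeGroup.lift f r = 1 := by
  rintro _ ⟨u, v, huv, rfl⟩
  simpa [commutatorElement_def] using commutatorElement_eq_one_iff_commute.2 (hf u v huv)

/-- The universal property of `G(Γ)`: the homomorphism with prescribed values on the vertices,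
provided that the values at non-adjacent vertices commute. -/
def lift (f : V → H) (hf : ∀ u v, Gᶜ.Adj u v → Commute (f u) (f v)) : GG G →* H :=
  PresentedGroup.toGroup (lift_eq_one_of_mem_raagRels hf)

theorem lift_of (f : V → H) (hf : ∀ u v, Gᶜ.Adj u v → Commute (f u) (f v)) (v : V) :
    lift f hf (PresentedGroup.of v) = f v :=
  PresentedGroup.toGroup.of _

end GG

section TwoSheets

variable (H : Type*) [Group H]

/-- The action of `H × H` on two disjoint copies of `H`, by left multiplication by the first
coordinate on the first copy and by the second coordinate on the second. -/
def sheetMul : H × H →* Equiv.Perm (H ⊕ H) :=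
  (Equiv.Perm.sumCongrHom H H).comp
    ((MulAction.toPermHom H H).prodMap (MulAction.toPermHom H H))

variable {H}

@[simp]
theorem sheetMul_inl (g : H × H) (x : H) : sheetMul H g (Sum.inl x) = Sum.inl (g.1 * x) := rfl

@[simp]
theorem sheetMul_inr (g : H × H) (x : H) : sheetMul H g (Sum.inr x) = Sum.inr (g.2 * x) := rfl

theorem commute_sumComm_sheetMul (g : H) :
    Commute (Equiv.sumComm H H : Equiv.Perm (H ⊕ H)) (sheetMul H (g, g)) := by
  ext (x | x) <;> simp

theorem injective_of_apply_eq_mul_of_closure {X : Type*} {S : Set H} (hS : Subgroup.closure S = ⊤)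
    (ψ : H →* Equiv.Perm X) {j : H → X} (hj : Function.Injective j)
    (h : ∀ s ∈ S, ∀ x, ψ s (j x) = j (s * x)) : Function.Injective ψ := by
  have hψ (g : H) : ∀ x, ψ g (j x) = j (g * x) := by
    have hg : g ∈ Subgroup.closure S := hS ▸ Subgroup.mem_top g
    induction hg using Subgroup.closure_induction with
    | mem s hs => exact h s hs
    | one => simp
    | mul a b _ _ ha hb => simp [ha, hb, mul_assoc]
    | inv a _ ha => intro x; rw [map_inv, Equiv.Perm.inv_eq_iff_eq, ha, mul_inv_cancel_left]
  intro g g' hgg'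
  have := (hψ g 1).symm.trans ((DFunLike.congr_fun hgg' (j 1)).trans (hψ g' 1))
  simpa using hj this

end TwoSheets

section SplitVertex

variable {V : Type*}

/-- The graph obtained from `Λ` by splitting the vertex `o` into the edge `[some o, none]`: the
edges from `o` to `D` are removed, and `none` is joined to `o` and to all vertices of `B`. When
`D ⊆ B ⊆ N(o)`, contracting `[some o, none]` gives back `Λ`. -/
def splitVertex (Λ : SimpleGraph V) (o : V) (D B : Set V) : SimpleGraph (Option V) where
  Adj
    | some u, some v => Λ.Adj u v ∧ (u = o → v ∉ D) ∧ (v = o → u ∉ D)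
    | some u, none => u = o ∨ u ∈ B
    | none, some v => v = o ∨ v ∈ B
    | none, none => False
  symm := ⟨by
    rintro (_ | u) (_ | v) h
    exacts [h, h, h, ⟨h.1.symm, h.2.2, h.2.1⟩]⟩
  loopless := ⟨by
    rintro (_ | u) h
    exacts [h, h.1.ne rfl]⟩

variable {Λ : SimpleGraph V} {o : V} {D B : Set V}

@[simp]
theorem splitVertex_adj_some_some {u v : V} :
    (splitVertex Λ o D B).Adj (some u) (some v) ↔
      Λ.Adj u v ∧ (u = o → v ∉ D) ∧ (v = o → u ∉ D) := Iff.rfl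

@[simp]
theorem splitVertex_adj_some_none {u : V} :
    (splitVertex Λ o D B).Adj (some u) none ↔ u = o ∨ u ∈ B := Iff.rfl

@[simp]
theorem splitVertex_adj_none_some {v : V} :
    (splitVertex Λ o D B).Adj none (some v) ↔ v = o ∨ v ∈ B := Iff.rfl

end SplitVertex

section SplitEmbedding

variable {V : Type} {Λ : SimpleGraph V} {o : V} {D B : Set V}

open Classical in
/-- The images of the generators of `G(Λ)` under the embedding into the group of the graph in which
`o` is split into `[a, b]`: the generator `o` goes to `b⁻¹ a b`, the others are kept. -/
noncomputable def splitGen (Λ : SimpleGraph V) (o : V) (D B : Set V) (v : V) :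
    GG (splitVertex Λ o D B) :=
  if v = o then
    (PresentedGroup.of none)⁻¹ * PresentedGroup.of (some o) * PresentedGroup.of none
  else PresentedGroup.of (some v)

theorem commute_splitGen_self (hB : B ⊆ Λ.neighborSet o) {v : V} (hv : v ≠ o)
    (hov : ¬Λ.Adj o v) : Commute (splitGen Λ o D B o) (splitGen Λ o D B v) := by
  have ha : Commute (PresentedGroup.of (some o) : GG (splitVertex Λ o D B))
      (PresentedGroup.of (some v)) := GG.commute_of fun h => hov h.1
  have hb : Commute (PresentedGroup.of none : GG (splitVertex Λ o D B))
      (PresentedGroup.of (some v)) := GG.commute_of fun h => h.elim hv fun hvB => hov (hB hvB)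
  simpa only [splitGen, if_pos, if_neg hv] using (hb.inv_left.mul_left ha).mul_left hb

theorem commute_splitGen (hB : B ⊆ Λ.neighborSet o) (u v : V) (huv : Λᶜ.Adj u v) :
    Commute (splitGen Λ o D B u) (splitGen Λ o D B v) := by
  obtain ⟨hne, hadj⟩ := (Λ.compl_adj u v).1 huv
  by_cases hu : u = o
  · subst hu
    exact commute_splitGen_self hB hne.symm hadj
  by_cases hv : v = o
  · subst hv
    exact (commute_splitGen_self hB hne fun h => hadj h.symm).symm
  have hnot : ¬(splitVertex Λ o D B).Adj (some u) (some v) := fun h => hadj h.1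
  simpa only [splitGen, if_neg hu, if_neg hv] using GG.commute_of hnot

open Classical in
/-- The generator `v` of `G(Λ)`, replaced by `1` when `v ∈ S`. -/
noncomputable def genOutside (Λ : SimpleGraph V) (S : Set V) (v : V) : GG Λ :=
  if v ∈ S then 1 else PresentedGroup.of v

theorem genOutside_of_mem {S : Set V} {v : V} (hv : v ∈ S) : genOutside Λ S v = 1 := if_pos hv

theorem genOutside_of_notMem {S : Set V} {v : V} (hv : v ∉ S) :
    genOutside Λ S v = PresentedGroup.of v := if_neg hv

theorem commute_genOutside {S : Set V} {u v : V} (h : u ∉ S → v ∉ S → ¬Λ.Adj u v) :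
    Commute (genOutside Λ S u) (genOutside Λ S v) := by
  by_cases hu : u ∈ S
  · rw [genOutside_of_mem hu]
    exact Commute.one_left _
  by_cases hv : v ∈ S
  · rw [genOutside_of_mem hv]
    exact Commute.one_right _
  rw [genOutside_of_notMem hu, genOutside_of_notMem hv]
  exact GG.commute_of (h hu hv)

/-- The permutations by which the generators of the group of the split graph act on two copies of
`G(Λ)`: the new vertex exchanges the copies, the vertex `o` acts on the second copy only, the
vertices of `B` act on the first copy only, and all others act on both. -/
noncomputable def splitPerm (Λ : SimpleGraph V) (o : V) (B : Set V) :
    Option V → Equiv.Perm (GG Λ ⊕ GG Λ)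
  | none => Equiv.sumComm (GG Λ) (GG Λ)
  | some v => sheetMul (GG Λ) (genOutside Λ {o} v, genOutside Λ B v)

theorem commute_splitPerm_none {v : V} (hvo : v ≠ o) (hvB : v ∉ B) :
    Commute (splitPerm Λ o B none) (splitPerm Λ o B (some v)) := by
  simp only [splitPerm, genOutside_of_notMem (Set.mem_singleton_iff.not.2 hvo),
    genOutside_of_notMem hvB]
  exact commute_sumComm_sheetMul _

theorem commute_splitPerm (hD : D ⊆ B) (x y : Option V)
    (hxy : (splitVertex Λ o D B)ᶜ.Adj x y) :
    Commute (splitPerm Λ o B x) (splitPerm Λ o B y) := by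
  obtain ⟨hne, hadj⟩ := ((splitVertex Λ o D B).compl_adj x y).1 hxy
  rcases x with _ | u <;> rcases y with _ | v
  · exact (hne rfl).elim
  · obtain ⟨hvo, hvB⟩ := not_or.1 hadj
    exact commute_splitPerm_none hvo hvB
  · obtain ⟨huo, huB⟩ := not_or.1 hadj
    exact (commute_splitPerm_none huo huB).symm
  · refine Commute.map (Commute.prod ?_ ?_) (sheetMul (GG Λ))
    · exact commute_genOutside fun hu hv h => hadj ⟨h, fun e => (hu e).elim, fun e => (hv e).elim⟩
    · exact commute_genOutside fun hu hv h => hadj ⟨h, fun _ hvD => hv (hD hvD),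
        fun _ huD => hu (hD huD)⟩

theorem exists_injective_splitVertex (hD : D ⊆ B) (hB : B ⊆ Λ.neighborSet o) :
    ∃ φ : GG Λ →* GG (splitVertex Λ o D B), Function.Injective φ := by
  let φ : GG Λ →* GG (splitVertex Λ o D B) := GG.lift (splitGen Λ o D B) (commute_splitGen hB)
  let ψ : GG (splitVertex Λ o D B) →* Equiv.Perm (GG Λ ⊕ GG Λ) :=
    GG.lift (splitPerm Λ o B) (commute_splitPerm hD)
  have ho : o ∉ B := fun h => (hB h).ne rfl
  suffices hψφ : Function.Injective (ψ.comp φ) from ⟨φ, Function.Injective.of_comp hψφ⟩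
  refine injective_of_apply_eq_mul_of_closure (PresentedGroup.closure_range_of _) (ψ.comp φ)
    Sum.inl_injective ?_
  rintro _ ⟨v, rfl⟩ x
  by_cases hv : v = o
  · subst hv
    simp [φ, ψ, GG.lift_of, splitGen, splitPerm, genOutside_of_notMem ho, Equiv.Perm.inv_def]
  · simp [φ, ψ, GG.lift_of, splitGen, splitPerm, hv,
      genOutside_of_notMem (Set.mem_singleton_iff.not.2 hv)]

end SplitEmbedding

section Core

variable {V W : Type*}

/-- A set of vertices which all have at least two neighbours inside the set; the largest such set is
the vertex set of the 2-core. -/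
def IsCore (G : SimpleGraph V) (S : Set V) : Prop :=
  ∀ v ∈ S, (G.neighborSet v ∩ S).Nontrivial

theorem exists_nonempty_isCore_of_not_isAcyclic {G : SimpleGraph V} (h : ¬G.IsAcyclic) :
    ∃ S : Set V, S.Nonempty ∧ IsCore G S := by
  simp only [IsAcyclic, not_forall, not_not] at h
  obtain ⟨v, c, hc⟩ := h
  refine ⟨{w | w ∈ c.support}, ⟨v, c.start_mem_support⟩, fun w hw => ?_⟩
  obtain ⟨p, q, hpq, hnbrs⟩ := Set.ncard_eq_two.1 (hc.ncard_neighborSet_toSubgraph_eq_two hw)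
  have htwo : (c.toSubgraph.neighborSet w).Nontrivial := hnbrs ▸ Set.nontrivial_pair hpq
  exact htwo.mono fun p hp => ⟨hp.adj_sub, (c.mem_verts_toSubgraph).1 hp.snd_mem⟩

theorem IsCore.preimage {G : SimpleGraph V} {H : SimpleGraph W} {T : Set W} (hT : IsCore H T)
    (f : G ↪g H) (hf : T ⊆ Set.range f) : IsCore G (f ⁻¹' T) := by
  intro v hv
  obtain ⟨p, ⟨hp, hpT⟩, q, ⟨hq, hqT⟩, hpq⟩ := hT (f v) hv
  obtain ⟨p, rfl⟩ := hf hpT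
  obtain ⟨q, rfl⟩ := hf hqT
  exact ⟨p, ⟨f.map_adj_iff.1 hp, hpT⟩, q, ⟨f.map_adj_iff.1 hq, hqT⟩, ne_of_apply_ne f hpq⟩

theorem splitVertex_singleton_adj_some_some {Λ : SimpleGraph V} {o z u v : V} :
    (splitVertex Λ o {z} {z}).Adj (some u) (some v) ↔ Λ.Adj u v ∧ s(u, v) ≠ s(o, z) := by
  rw [splitVertex_adj_some_some, Ne, Sym2.eq_iff]
  grind

open Classical in
theorem IsCore.splitVertex_singleton {Λ : SimpleGraph V} {S : Set V} (hS : IsCore Λ S) {o z : V}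
    (ho : o ∈ S) (hz : z ∈ S) (hoz : o ≠ z) :
    IsCore (splitVertex Λ o {z} {z}) (insert none (some '' S)) := by
  rintro (_ | v) hv
  · exact ⟨some o, by simpa using ho, some z, by simpa using hz, by simpa using hoz⟩
  · have hvS : v ∈ S := by simpa using hv
    let reroute : V → Option V := fun p => if s(v, p) = s(o, z) then none else some p
    have hreroute_pos {p : V} (hp : s(v, p) = s(o, z)) : reroute p = none := if_pos hp
    have hreroute_neg {p : V} (hp : s(v, p) ≠ s(o, z)) : reroute p = some p := if_neg hp
    have hinj : Function.Injective reroute := by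
      intro p q hpq
      by_cases hp : s(v, p) = s(o, z) <;> by_cases hq : s(v, q) = s(o, z)
      · exact Sym2.congr_right.1 (hp.trans hq.symm)
      · simp [hreroute_pos hp, hreroute_neg hq] at hpq
      · simp [hreroute_neg hp, hreroute_pos hq] at hpq
      · simpa only [hreroute_neg hp, hreroute_neg hq, Option.some_inj] using hpq
    refine ((hS v hvS).image hinj).mono ?_
    rintro _ ⟨p, ⟨hp, hpS⟩, rfl⟩
    by_cases h : s(v, p) = s(o, z)
    · rw [hreroute_pos h]
      exact ⟨Sym2.mem_iff.1 (h ▸ Sym2.mem_mk_left v p), Or.inl rfl⟩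
    · rw [hreroute_neg h]
      exact ⟨splitVertex_singleton_adj_some_some.2 ⟨hp, h⟩, Or.inr ⟨p, hpS, rfl⟩⟩

theorem ncard_edgeSet_splitVertex_singleton_le [Finite V] {Λ : SimpleGraph V} {o z : V}
    (hoz : Λ.Adj o z) :
    (splitVertex Λ o {z} {z}).edgeSet.ncard ≤ Λ.edgeSet.ncard + 1 := by
  have hsub : (splitVertex Λ o {z} {z}).edgeSet ⊆ insert s(none, some o)
      (insert s(none, some z) (Sym2.map some '' (Λ.edgeSet \ {s(o, z)}))) := by
    intro e he
    induction e using Sym2.ind with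
    | _ x y =>
      rcases x with _ | u <;> rcases y with _ | v
      · exact he.elim
      · rcases he with rfl | rfl <;> simp
      · rcases he with rfl | rfl <;> simp
      · exact Or.inr (Or.inr ⟨s(u, v), splitVertex_singleton_adj_some_some.1 he, rfl⟩)
  calc (splitVertex Λ o {z} {z}).edgeSet.ncard
      ≤ _ := Set.ncard_le_ncard hsub
    _ ≤ (Sym2.map some '' (Λ.edgeSet \ {s(o, z)})).ncard + 1 + 1 :=
        (Set.ncard_insert_le _ _).trans (by gcongr; exact Set.ncard_insert_le _ _)
    _ ≤ (Λ.edgeSet \ {s(o, z)}).ncard + 1 + 1 := by gcongr; exact Set.ncard_image_le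
    _ = Λ.edgeSet.ncard + 1 := by
        rw [Set.ncard_sdiff_singleton_add_one (Λ.mem_edgeSet.2 hoz)]

theorem ncard_edgeSet_add_ncard_neighborSet_le [Finite W] {G : SimpleGraph V} {H : SimpleGraph W}
    (f : G ↪g H) {x : W} (hx : x ∉ Set.range f) :
    G.edgeSet.ncard + (H.neighborSet x).ncard ≤ H.edgeSet.ncard := by
  classical
  have hdisj : Disjoint (Sym2.map f '' G.edgeSet) (H.incidenceSet x) := by
    rw [Set.disjoint_left]
    rintro _ ⟨e, -, rfl⟩ hxe
    obtain ⟨v, -, hv⟩ := Sym2.mem_map.1 hxe.2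
    exact hx ⟨v, hv⟩
  have hsub : Sym2.map f '' G.edgeSet ∪ H.incidenceSet x ⊆ H.edgeSet := by
    refine Set.union_subset ?_ (H.incidenceSet_subset x)
    rintro _ ⟨e, he, rfl⟩
    exact f.toHom.map_mem_edgeSet he
  calc G.edgeSet.ncard + (H.neighborSet x).ncard
      = (Sym2.map f '' G.edgeSet).ncard + (H.incidenceSet x).ncard := by
        rw [Set.ncard_image_of_injective _ (Sym2.map.injective f.injective)]
        congr 1
        exact (Nat.card_congr (H.incidenceSetEquivNeighborSet x)).symm
    _ = (Sym2.map f '' G.edgeSet ∪ H.incidenceSet x).ncard := (Set.ncard_union_eq hdisj).symm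
    _ ≤ H.edgeSet.ncard := Set.ncard_le_ncard hsub

theorem isEmpty_embedding_splitVertex_singleton [Finite V] {Λ : SimpleGraph V} {S : Set V}
    (hS : IsCore Λ S) (hmax : ∀ T, IsCore Λ T → T.ncard ≤ S.ncard) {v w : V} (hv : v ∈ S)
    (hw : w ∈ S) (hvw : Λ.Adj v w) : IsEmpty (Λ ↪g splitVertex Λ v {w} {w}) := by
  refine ⟨fun f => ?_⟩
  let T : Set (Option V) := insert none (some '' S)
  have hT : IsCore (splitVertex Λ v {w} {w}) T := hS.splitVertex_singleton hv hw hvw.ne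
  have hTcard : T.ncard = S.ncard + 1 := by
    rw [Set.ncard_insert_of_notMem (by simp),
      Set.ncard_image_of_injective _ (Option.some_injective V)]
  obtain ⟨x, hxT, hxf⟩ : ∃ x ∈ T, x ∉ Set.range f := by
    by_contra! hTf
    have hle := hmax _ (hT.preimage f hTf)
    rw [Set.ncard_preimage_of_injective_subset_range f.injective hTf] at hle
    lia
  have hdeg : 1 < ((splitVertex Λ v {w} {w}).neighborSet x).ncard :=
    Set.one_lt_ncard_iff_nontrivial.2 ((hT x hxT).mono Set.inter_subset_left)
  have hmissed := ncard_edgeSet_add_ncard_neighborSet_le f hxf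
  have hsplit := ncard_edgeSet_splitVertex_singleton_le hvw
  lia

end Core

section StarCenter

variable {V W : Type*}

/-- `v` is the centre of an induced star with `d` leaves. -/
def IsStarCenter (G : SimpleGraph V) (d : ℕ) (v : V) : Prop :=
  ∃ A ⊆ G.neighborSet v, G.IsIndepSet A ∧ A.ncard = d

theorem IsStarCenter.map {G : SimpleGraph V} {H : SimpleGraph W} {d : ℕ} {v : V}
    (h : IsStarCenter G d v) (f : G ↪g H) : IsStarCenter H d (f v) := by
  obtain ⟨A, hAv, hA, hcard⟩ := h
  refine ⟨f '' A, ?_, ?_, by rw [Set.ncard_image_of_injective _ f.injective, hcard]⟩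
  · rintro _ ⟨a, ha, rfl⟩
    exact f.map_adj_iff.2 (hAv ha)
  · rintro _ ⟨a, ha, rfl⟩ _ ⟨b, hb, rfl⟩ hab
    rw [f.map_adj_iff]
    exact hA ha hb (ne_of_apply_ne f hab)

theorem isStarCenter_of_cliqueFree_three {G : SimpleGraph V} (hG : G.CliqueFree 3) {d : ℕ} {v : V}
    (hd : d ≤ (G.neighborSet v).ncard) : IsStarCenter G d v := by
  obtain ⟨A, hAv, hA⟩ := Set.exists_subset_card_eq hd
  exact ⟨A, hAv, (isIndepSet_neighborSet_of_triangleFree G hG v).mono hAv, hA⟩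

theorem not_isStarCenter_of_adj {G : SimpleGraph V} {d : ℕ} {v s t : V}
    (hfin : (G.neighborSet v).Finite) (hd : (G.neighborSet v).ncard ≤ d)
    (hs : G.Adj v s) (ht : G.Adj v t) (hst : G.Adj s t) : ¬IsStarCenter G d v := by
  rintro ⟨A, hAv, hA, rfl⟩
  obtain rfl := Set.eq_of_subset_of_ncard_le hAv hd hfin
  exact hA hs ht hst.ne hst

theorem le_ncard_neighborSet_of_isStarCenter_splitVertex {Λ : SimpleGraph V} {o : V} {D B : Set V}
    (hB : B ⊆ Λ.neighborSet o) {d : ℕ} {v : V} (hvo : v ≠ o) (hfin : (Λ.neighborSet v).Finite)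
    (h : IsStarCenter (splitVertex Λ o D B) d (some v)) : d ≤ (Λ.neighborSet v).ncard := by
  obtain ⟨A, hAv, hA, rfl⟩ := h
  refine Set.ncard_le_ncard_of_injOn (fun x => x.getD o) ?_ ?_ hfin
  · rintro (_ | a) ha
    · exact (hB ((hAv ha).resolve_left hvo)).symm
    · exact (hAv ha).1
  · rintro (_ | a) ha (_ | b) hb hab
    · rfl
    · exact (hA ha hb (by simp) (Or.inl hab.symm)).elim
    · exact (hA ha hb (by simp) (Or.inl hab)).elim
    · exact congrArg some hab

end StarCenter

section SubdivPlus

variable {V : Type} {Λ : SimpleGraph V}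

theorem splitVertex_eq_subdivEdge {v w : V} :
    splitVertex Λ v {w} {w} = SubdivEdge Λ v w := by
  ext (_ | a) (_ | b) <;>
    simp only [SubdivEdge, fromRel_adj, SimpleGraph.irrefl, splitVertex_adj_some_some,
      splitVertex_adj_some_none, splitVertex_adj_none_some, Set.mem_singleton_iff]
  all_goals grind [Λ.ne_of_adj, Λ.adj_comm]

theorem splitVertex_eq_plusGraph {u w₁ w₂ : V} (h₂ : Λ.Adj u w₂) (hne : w₁ ≠ w₂) :
    splitVertex Λ u {w₁} {w₁, w₂} = PlusGraph Λ u w₁ w₂ := by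
  ext (_ | a) (_ | b) <;>
    simp only [PlusGraph, MinusGraph, fromRel_adj, SimpleGraph.irrefl, splitVertex_adj_some_some,
      splitVertex_adj_some_none, splitVertex_adj_none_some, Set.mem_insert_iff,
      Set.mem_singleton_iff]
  all_goals grind [Λ.ne_of_adj, Λ.adj_comm]

theorem exists_injective_subdivEdge {v w : V} (hvw : Λ.Adj v w) :
    ∃ φ : GG Λ →* GG (SubdivEdge Λ v w), Function.Injective φ := by
  rw [← splitVertex_eq_subdivEdge]
  exact exists_injective_splitVertex subset_rfl (Set.singleton_subset_iff.2 hvw)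

theorem exists_injective_plusGraph {u w₁ w₂ : V} (h₁ : Λ.Adj u w₁) (h₂ : Λ.Adj u w₂)
    (hne : w₁ ≠ w₂) : ∃ φ : GG Λ →* GG (PlusGraph Λ u w₁ w₂), Function.Injective φ := by
  rw [← splitVertex_eq_plusGraph h₂ hne]
  exact exists_injective_splitVertex (Set.singleton_subset_iff.2 (Set.mem_insert _ _))
    (Set.pair_subset h₁ h₂)

theorem exists_isEmpty_embedding_subdivEdge [Finite V] (h : ¬Λ.IsAcyclic) :
    ∃ v w, Λ.Adj v w ∧ IsEmpty (Λ ↪g SubdivEdge Λ v w) := by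
  obtain ⟨S₀, hS₀, hcore₀⟩ := exists_nonempty_isCore_of_not_isAcyclic h
  obtain ⟨S, hS, hmax⟩ := Set.exists_max_image {S | IsCore Λ S} Set.ncard (Set.toFinite _)
    ⟨S₀, hcore₀⟩
  obtain ⟨v, hv⟩ : S.Nonempty := by
    rw [← Set.ncard_pos]
    exact ((Set.ncard_pos).2 hS₀).trans_le (hmax S₀ hcore₀)
  obtain ⟨w, hvw, hw⟩ := (hS v hv).nonempty
  refine ⟨v, w, hvw, ?_⟩
  rw [← splitVertex_eq_subdivEdge]
  exact isEmpty_embedding_splitVertex_singleton hS hmax hv hw hvw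

section PlusGraph

variable {Λ : SimpleGraph V} {u w₁ w₂ : V} {d : ℕ}

theorem not_isStarCenter_plusGraph_none (h₂ : Λ.Adj u w₂) (hne : w₁ ≠ w₂) (hd : 3 ≤ d) :
    ¬IsStarCenter (PlusGraph Λ u w₁ w₂) d none := by
  rw [← splitVertex_eq_plusGraph h₂ hne]
  have hsub : (splitVertex Λ u {w₁} {w₁, w₂}).neighborSet none ⊆ {some u, some w₁, some w₂} := by
    rintro (_ | a) ha
    · exact ha.elim
    · simpa using ha
  have hcard : ((splitVertex Λ u {w₁} {w₁, w₂}).neighborSet none).ncard ≤ 3 :=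
    calc ((splitVertex Λ u {w₁} {w₁, w₂}).neighborSet none).ncard
        ≤ ({some u, some w₁, some w₂} : Set (Option V)).ncard := Set.ncard_le_ncard hsub
      _ ≤ ({some w₂} : Set (Option V)).ncard + 1 + 1 :=
          (Set.ncard_insert_le _ _).trans (by gcongr; exact Set.ncard_insert_le _ _)
      _ = 3 := by rw [Set.ncard_singleton]
  refine not_isStarCenter_of_adj (s := some u) (t := some w₂) ((Set.toFinite _).subset hsub)
    (hcard.trans hd) ?_ ?_ ?_ <;> simp [h₂, hne.symm, h₂.ne']

variable [Finite V]

theorem not_isStarCenter_plusGraph_some (h₁ : Λ.Adj u w₁) (h₂ : Λ.Adj u w₂) (hne : w₁ ≠ w₂)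
    (hd : (Λ.neighborSet u).ncard ≤ d) :
    ¬IsStarCenter (PlusGraph Λ u w₁ w₂) d (some u) := by
  rw [← splitVertex_eq_plusGraph h₂ hne]
  have hsub : (splitVertex Λ u {w₁} {w₁, w₂}).neighborSet (some u) ⊆
      insert none (some '' (Λ.neighborSet u \ {w₁})) := by
    rintro (_ | a) ha
    · simp
    · exact Or.inr ⟨a, ⟨ha.1, ha.2.1 rfl⟩, rfl⟩
  have hcard : ((splitVertex Λ u {w₁} {w₁, w₂}).neighborSet (some u)).ncard ≤
      (Λ.neighborSet u).ncard :=
    calc ((splitVertex Λ u {w₁} {w₁, w₂}).neighborSet (some u)).ncard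
        ≤ (insert none (some '' (Λ.neighborSet u \ {w₁}))).ncard := Set.ncard_le_ncard hsub
      _ ≤ (some '' (Λ.neighborSet u \ {w₁})).ncard + 1 := Set.ncard_insert_le _ _
      _ = (Λ.neighborSet u \ {w₁}).ncard + 1 := by
          rw [Set.ncard_image_of_injective _ (Option.some_injective V)]
      _ = (Λ.neighborSet u).ncard := Set.ncard_sdiff_singleton_add_one h₁
  refine not_isStarCenter_of_adj (s := none) (t := some w₂) (Set.toFinite _)
    (hcard.trans hd) ?_ ?_ ?_ <;> simp [h₂, hne.symm, h₂.ne']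

theorem exists_isStarCenter_of_isStarCenter_plusGraph (hfree : Λ.CliqueFree 3) (h₁ : Λ.Adj u w₁)
    (h₂ : Λ.Adj u w₂) (hne : w₁ ≠ w₂) (hd : 3 ≤ (Λ.neighborSet u).ncard) {x : Option V}
    (hx : IsStarCenter (PlusGraph Λ u w₁ w₂) (Λ.neighborSet u).ncard x) :
    ∃ v, IsStarCenter Λ (Λ.neighborSet u).ncard v ∧ v ≠ u ∧ some v = x := by
  rcases x with _ | v
  · exact (not_isStarCenter_plusGraph_none h₂ hne hd hx).elim
  · have hvu : v ≠ u := by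
      rintro rfl
      exact not_isStarCenter_plusGraph_some h₁ h₂ hne le_rfl hx
    rw [← splitVertex_eq_plusGraph h₂ hne] at hx
    have hB : {w₁, w₂} ⊆ Λ.neighborSet u := Set.pair_subset h₁ h₂
    exact ⟨v, isStarCenter_of_cliqueFree_three hfree
      (le_ncard_neighborSet_of_isStarCenter_splitVertex hB hvu (Set.toFinite _) hx), hvu, rfl⟩

theorem isEmpty_embedding_plusGraph (hfree : Λ.CliqueFree 3) (h₁ : Λ.Adj u w₁) (h₂ : Λ.Adj u w₂)
    (hne : w₁ ≠ w₂) (hd : 3 ≤ (Λ.neighborSet u).ncard) :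
    IsEmpty (Λ ↪g PlusGraph Λ u w₁ w₂) := by
  refine ⟨fun f => ?_⟩
  let C : Set V := {v | IsStarCenter Λ (Λ.neighborSet u).ncard v}
  have hu : u ∈ C := isStarCenter_of_cliqueFree_three hfree le_rfl
  have hsub : f '' C ⊆ some '' (C \ {u}) := by
    rintro _ ⟨v, hv, rfl⟩
    obtain ⟨v', hv', hne', h⟩ := exists_isStarCenter_of_isStarCenter_plusGraph hfree h₁ h₂ hne hd
      (IsStarCenter.map hv f)
    exact ⟨v', ⟨hv', hne'⟩, h⟩
  have hle := Set.ncard_le_ncard hsub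
  rw [Set.ncard_image_of_injective _ f.injective,
    Set.ncard_image_of_injective _ (Option.some_injective V)] at hle
  exact (Set.ncard_sdiff_singleton_lt_of_mem hu).not_ge hle

end PlusGraph

end SubdivPlus

/-- If `Λ` is not a linear forest, then there exists a finite graph `Γ` with
`G(Λ) ↪ G(Γ)` but `Λ` not an induced subgraph of `Γ`. -/
theorem statement2 {V : Type} [Fintype V] (Λ : SimpleGraph V)
    (hΛ : ¬ IsLinearForest Λ) :
    ∃ (W : Type) (_ : Fintype W) (Γ : SimpleGraph W),
      (∃ φ : GG Λ →* GG Γ, Function.Injective φ) ∧ ¬ Nonempty (Λ ↪g Γ) := by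
  by_cases hacyc : Λ.IsAcyclic
  · obtain ⟨u, hu⟩ : ∃ u, 2 < (Λ.neighborSet u).ncard := by
      by_contra! hdeg
      exact hΛ ⟨hacyc, hdeg⟩
    obtain ⟨w₁, w₂, h₁, h₂, hne⟩ := (Set.one_lt_ncard_iff).1 (one_lt_two.trans hu)
    exact ⟨Option V, inferInstance, PlusGraph Λ u w₁ w₂, exists_injective_plusGraph h₁ h₂ hne,
      not_nonempty_iff.2 (isEmpty_embedding_plusGraph (hacyc.cliqueFree le_rfl) h₁ h₂ hne hu)⟩
  · obtain ⟨v, w, hvw, hempty⟩ := exists_isEmpty_embedding_subdivEdge hacyc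
    exact ⟨Option V, inferInstance, SubdivEdge Λ v w, exists_injective_subdivEdge hvw,
      not_nonempty_iff.2 hempty⟩
end

section
/- For all positive integers m and n, there is an injective group homomorphism from G(P_m) into G(P_n) if and only if m ≤ n. -/
open SimpleGraph

/-! Splitting off one generator `v` embeds a right-angled Artin group in `FreeGroup (H ⧸ K) ⋊ H`,
where `H` is generated by the other vertices and `K` by the link of `v`. An abelian subgroup
commuting with a nontrivial element `w` of the free factor permutes the finitely many letters of the
cyclic reduction of `w`, so a subgroup of finite index maps to the stabilizer of a coset, which is a
conjugate of `K`. By induction on the number of vertices, the largest rank of an abelian subgroup is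
the clique number of the graph. For the complement of the path on `n` vertices this is `⌈n / 2⌉`,
which rules out an embedding of `G(P_{2k+1})` in `G(P_{2k})`.

For `n = 2q + 1` the ranks do not suffice, but the vertices `0, 2, …, 2q` form the only largest
clique. The same induction shows that an element of `G(P_{2q+1})` commuting with a subgroup of rank
`q` of an abelian subgroup `A` of rank `q + 1` commutes with all of `A`. This fails in
`G(P_{2q+2})`, where the vertex `0` commutes with all of `1, 3, …, 2q + 1` except `1`. -/

universe u

section AbelianRank

/-- The torsion-free rank of an abelian group, written multiplicatively. -/
noncomputable abbrev abelianRank (A : Type u) [CommGroup A] : Cardinal.{u} :=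
  Module.rank ℤ (Additive A)

/-- Every abelian group embedded in `G` has torsion-free rank at most `s`. The abelian group is a
separate type mapping injectively to `G`, rather than a subgroup of `G`. -/
def AbelianRankLE (s : ℕ) (G : Type u) [Group G] : Prop :=
  ∀ (A : Type u) [CommGroup A] (f : A →* G), Function.Injective f → abelianRank A ≤ s

variable {A B G H : Type u} [CommGroup A] [CommGroup B] [Group G] [Group H]

theorem abelianRank_le_of_injective (f : A →* B) (hf : Function.Injective f) :
    abelianRank A ≤ abelianRank B :=
  (MonoidHom.toAdditive f).toIntLinearMap.rank_le_of_injective hf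

theorem abelianRank_le_add_ker (f : A →* B) :
    abelianRank A ≤ abelianRank B + abelianRank f.ker := by
  let F := (MonoidHom.toAdditive f).toIntLinearMap
  let kerEquiv : F.ker ≃+ Additive f.ker :=
    { toFun := fun a => .ofMul ⟨a.1.toMul, a.2⟩
      invFun := fun a => ⟨.ofMul a.toMul.1, a.toMul.2⟩
      map_add' := fun _ _ => rfl }
  rw [abelianRank, ← F.rank_range_add_rank_ker, kerEquiv.toIntLinearEquiv.rank_eq]
  gcongr
  exact F.range.rank_le

theorem abelianRank_eq_zero_of_finite [Finite A] : abelianRank A = 0 :=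
  Module.rank_eq_zero_iff_isTorsion.2 <|
    isAddTorsion_iff_isTorsion_int.1 isAddTorsion_of_finite

theorem abelianRank_le_of_finiteIndex (B : Subgroup A) [B.FiniteIndex] :
    abelianRank A ≤ abelianRank B := by
  have h := abelianRank_le_add_ker (QuotientGroup.mk' B)
  rwa [QuotientGroup.ker_mk', abelianRank_eq_zero_of_finite (A := A ⧸ B), zero_add] at h

theorem abelianRank_le_one_of_isCyclic [IsCyclic A] : abelianRank A ≤ 1 := by
  obtain ⟨g, hg⟩ := IsCyclic.exists_generator (α := A)
  exact rank_le_one (Additive.ofMul g) fun a => hg a.toMul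

theorem abelianRank_pi_multiplicative_int (ι : Type) [Fintype ι] :
    abelianRank (ι → Multiplicative ℤ) = Fintype.card ι := by
  have e : Additive (ι → Multiplicative ℤ) ≃ₗ[ℤ] (ι → ℤ) :=
    (AddEquiv.piAdditive fun _ : ι => Multiplicative ℤ).toIntLinearEquiv
  rw [abelianRank, e.rank_eq, rank_fun']

theorem AbelianRankLE.of_injective {s : ℕ} (h : AbelianRankLE s H) (f : G →* H)
    (hf : Function.Injective f) : AbelianRankLE s G :=
  fun A _ j hj => h A (f.comp j) (hf.comp hj)

theorem AbelianRankLE.abelianRank_le_add_ker {s : ℕ} (h : AbelianRankLE s G) (f : A →* G) :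
    abelianRank A ≤ s + abelianRank f.ker := by
  have hquot := h _ (QuotientGroup.kerLift f) (QuotientGroup.kerLift_injective f)
  calc abelianRank A ≤ abelianRank (A ⧸ f.ker) + abelianRank (QuotientGroup.mk' f.ker).ker :=
        _root_.abelianRank_le_add_ker _
    _ ≤ s + abelianRank f.ker := by rw [QuotientGroup.ker_mk']; gcongr

theorem AbelianRankLE.abelianRank_ker_comp_le {s : ℕ} {p : G →* H} (h : AbelianRankLE s p.ker)
    {f : A →* G} (hf : Function.Injective f) : abelianRank (p.comp f).ker ≤ s :=
  h _ (f.subgroupComap p.ker) fun _ _ hab =>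
    Subtype.ext (hf (congrArg Subtype.val hab))

end AbelianRank

section FreeGroup

theorem isConj_mulEquiv_apply_iff {G H : Type*} [Group G] [Group H] (e : G ≃* H) {g h : G} :
    IsConj (e g) (e h) ↔ IsConj g h := by
  refine ⟨fun hconj => ?_, e.toMonoidHom.map_isConj⟩
  simpa only [MulEquiv.coe_toMonoidHom, e.symm_apply_apply] using
    e.symm.toMonoidHom.map_isConj hconj

variable {X : Type u}

theorem commute_freeGroup_of_iff {x y : X} :
    Commute (FreeGroup.of x) (FreeGroup.of y) ↔ x = y := by
  classical
  refine ⟨fun h => ?_, fun h => h ▸ .refl _⟩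
  by_contra hne
  simpa [FreeGroup.toWord_mul, FreeGroup.reduce.cons, hne] using congrArg FreeGroup.toWord h.eq

instance isCyclic_freeGroup [Subsingleton X] : IsCyclic (FreeGroup X) := by
  obtain _ | ⟨⟨x⟩⟩ := isEmpty_or_nonempty X
  · infer_instance
  · let : Unique X := uniqueOfSubsingleton x
    infer_instance

theorem abelianRankLE_one_freeGroup (X : Type u) : AbelianRankLE 1 (FreeGroup X) := by
  intro A _ f hf
  have e : A ≃* FreeGroup (IsFreeGroup.Generators f.range) :=
    (MonoidHom.ofInjective hf).trans (IsFreeGroup.toFreeGroup f.range)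
  have : Subsingleton (IsFreeGroup.Generators f.range) :=
    ⟨fun x y => commute_freeGroup_of_iff.1 <| by
      simpa using (Commute.all (e.symm (.of x)) (e.symm (.of y))).map e⟩
  have : IsCyclic A := isCyclic_of_surjective e.symm e.symm.surjective
  exact_mod_cast abelianRank_le_one_of_isCyclic

/-- The endomorphism of the free group sending the basis elements in `S` to `1` and fixing the
others. -/
noncomputable def eraseLetters (S : Set X) : FreeGroup X →* FreeGroup X :=
  open Classical in FreeGroup.lift fun x => if x ∈ S then 1 else FreeGroup.of x

/-- The letters `x` such that `w` is not conjugate to the word obtained from it by erasing `x`;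
these turn out to be the letters of the cyclic reduction of `w`. The definition makes invariance
under conjugation and under automorphisms permuting the basis immediate. -/
def essentialLetters (w : FreeGroup X) : Set X :=
  {x | ¬ IsConj (eraseLetters {x} w) w}

theorem eraseLetters_eraseLetters (S T : Set X) (w : FreeGroup X) :
    eraseLetters S (eraseLetters T w) = eraseLetters (S ∪ T) w := by
  refine DFunLike.congr_fun (f := (eraseLetters S).comp (eraseLetters T)) ?_ w
  ext x
  by_cases hS : x ∈ S <;> by_cases hT : x ∈ T <;> simp [eraseLetters, hS, hT]

theorem eraseLetters_freeGroupCongr (e : Equiv.Perm X) (x : X) (w : FreeGroup X) :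
    eraseLetters {e x} (FreeGroup.freeGroupCongr e w) =
      FreeGroup.freeGroupCongr e (eraseLetters {x} w) := by
  refine DFunLike.congr_fun (f := (eraseLetters {e x}).comp (FreeGroup.freeGroupCongr e : _ →* _))
    (g := (FreeGroup.freeGroupCongr e : _ →* _).comp (eraseLetters {x})) ?_ w
  ext y
  by_cases hy : y = x <;> simp [eraseLetters, hy]

theorem exists_finset_mem_closure_of (w : FreeGroup X) :
    ∃ T : Finset X, w ∈ Subgroup.closure (FreeGroup.of '' (T : Set X)) := by
  classical
  have mono {S T : Finset X} (h : S ⊆ T) :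
      Subgroup.closure (FreeGroup.of '' (S : Set X)) ≤ Subgroup.closure (FreeGroup.of '' T) :=
    Subgroup.closure_mono (Set.image_mono h)
  induction w using FreeGroup.induction_on with
  | C1 => exact ⟨∅, one_mem _⟩
  | of x => exact ⟨{x}, Subgroup.subset_closure ⟨x, by simp, rfl⟩⟩
  | inv_of x ih => exact ih.imp fun _ => inv_mem
  | mul v w ihv ihw =>
    obtain ⟨S, hS⟩ := ihv
    obtain ⟨T, hT⟩ := ihw
    exact ⟨S ∪ T, mul_mem (mono Finset.subset_union_left hS) (mono Finset.subset_union_right hT)⟩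

theorem eraseLetters_eq_one {T : Set X} {w : FreeGroup X}
    (hw : w ∈ Subgroup.closure (FreeGroup.of '' T)) : eraseLetters T w = 1 := by
  refine MonoidHom.eqOn_closure (g := 1) ?_ hw
  rintro _ ⟨x, hx, rfl⟩
  simp [eraseLetters, hx]

theorem eraseLetters_eq_self {S T : Set X} (hST : Disjoint S T) {w : FreeGroup X}
    (hw : w ∈ Subgroup.closure (FreeGroup.of '' T)) : eraseLetters S w = w := by
  refine MonoidHom.eqOn_closure (g := .id _) ?_ hw
  rintro _ ⟨x, hx, rfl⟩
  simp [eraseLetters, Set.disjoint_right.1 hST hx]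

theorem finite_essentialLetters (w : FreeGroup X) : (essentialLetters w).Finite := by
  obtain ⟨T, hT⟩ := exists_finset_mem_closure_of w
  refine T.finite_toSet.subset fun x hx => ?_
  by_contra hxT
  exact hx (by rw [eraseLetters_eq_self (Set.disjoint_singleton_left.2 hxT) hT])

theorem nonempty_essentialLetters {w : FreeGroup X} (hw : w ≠ 1) :
    (essentialLetters w).Nonempty := by
  classical
  by_contra! hempty
  have hconj (x : X) : IsConj (eraseLetters {x} w) w :=
    not_not.1 (Set.eq_empty_iff_forall_notMem.1 hempty x)
  have hconjFinset (T : Finset X) : IsConj (eraseLetters T w) w := by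
    induction T using Finset.induction_on with
    | empty => rw [Finset.coe_empty, eraseLetters_eq_self (Set.empty_disjoint Set.univ) (by simp)]
    | insert x T _ ih =>
      rw [Finset.coe_insert, Set.insert_eq, Set.union_comm, ← eraseLetters_eraseLetters]
      exact (MonoidHom.map_isConj _ (hconj x)).trans ih
  obtain ⟨T, hT⟩ := exists_finset_mem_closure_of w
  have h1 := hconjFinset T
  rw [eraseLetters_eq_one hT] at h1
  exact hw (isConj_one_right.1 h1)

theorem essentialLetters_eq_of_isConj {v w : FreeGroup X} (h : IsConj v w) :
    essentialLetters v = essentialLetters w := by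
  ext x
  have herase : IsConj (eraseLetters {x} v) (eraseLetters {x} w) := MonoidHom.map_isConj _ h
  exact not_congr ⟨fun hv => (herase.symm.trans hv).trans h,
    fun hw => (herase.trans hw).trans h.symm⟩

theorem apply_mem_essentialLetters_freeGroupCongr (e : Equiv.Perm X) {x : X} {w : FreeGroup X} :
    e x ∈ essentialLetters (FreeGroup.freeGroupCongr e w) ↔ x ∈ essentialLetters w := by
  refine not_congr ?_
  rw [eraseLetters_freeGroupCongr, isConj_mulEquiv_apply_iff]

end FreeGroup

section PermutationSemidirectProduct

open scoped commutatorElement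
open SemidirectProduct

theorem finiteIndex_comap_stabilizer {G H X : Type*} [Group G] [Group H] [MulAction H X]
    (φ : G →* H) {S : Set X} (hS : S.Finite) {x : X} (hx : ∀ g, φ g • x ∈ S) :
    ((MulAction.stabilizer H x).comap φ).FiniteIndex := by
  let : MulAction G X := MulAction.compHom X φ
  have horbit : (MulAction.orbit G x).Finite := hS.subset (Set.range_subset_iff.2 hx)
  have hindex : (MulAction.stabilizer G x).FiniteIndex := by
    rw [Subgroup.finiteIndex_iff, MulAction.index_stabilizer]
    exact (Set.ncard_pos horbit).2 (MulAction.nonempty_orbit x) |>.ne'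
  exact hindex

theorem isConj_of_commute_inl {N G : Type*} [Group N] [Group G] {φ : G →* MulAut N}
    {g : N ⋊[φ] G} {n : N} (h : Commute g (inl n)) : IsConj (φ g.right n) n := by
  refine isConj_iff.2 ⟨g.left, mul_inv_eq_of_eq_mul ?_⟩
  simpa using congrArg SemidirectProduct.left h.eq

/-- The action of the permutations of a basis on the free group. -/
def freeGroupPermHom (X : Type*) : Equiv.Perm X →* MulAut (FreeGroup X) where
  toFun := FreeGroup.freeGroupCongr
  map_one' := FreeGroup.freeGroupCongr_refl
  map_mul' e e' := (FreeGroup.freeGroupCongr_trans e' e).symm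

/-- The action of `H` on the free group over an `H`-set `X` which permutes the basis. -/
def permAut (H X : Type*) [Group H] [MulAction H X] : H →* MulAut (FreeGroup X) :=
  (freeGroupPermHom X).comp (MulAction.toPermHom H X)

variable {A H X : Type u} [CommGroup A] [Group H] [MulAction H X] {s q : ℕ}

theorem AbelianRankLE.stabilizer_quotient {K : Subgroup H} (h : AbelianRankLE s K) (x : H ⧸ K) :
    AbelianRankLE s (MulAction.stabilizer H x) := by
  obtain ⟨g, hg⟩ := MulAction.exists_smul_eq H ((1 : H) : H ⧸ K) x
  rw [← MulAction.stabilizer_quotient K] at h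
  exact h.of_injective (MulAction.stabilizerEquivStabilizer hg.symm).symm.toMonoidHom
    (MulEquiv.injective _)

theorem permAut_apply_of (h : H) (x : X) :
    permAut H X h (FreeGroup.of x) = FreeGroup.of (h • x) :=
  FreeGroup.map.of

theorem smul_mem_essentialLetters {g : FreeGroup X ⋊[permAut H X] H} {w : FreeGroup X}
    (h : Commute g (inl w)) {x : X} (hx : x ∈ essentialLetters w) :
    g.right • x ∈ essentialLetters w := by
  rw [← essentialLetters_eq_of_isConj (isConj_of_commute_inl h)]
  exact (apply_mem_essentialLetters_freeGroupCongr (MulAction.toPerm g.right)).2 hx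

theorem abelianRank_le_of_commute_inl (hs : ∀ x : X, AbelianRankLE s (MulAction.stabilizer H x))
    {w : FreeGroup X} (hw : w ≠ 1) (f : A →* FreeGroup X ⋊[permAut H X] H)
    (hf : ∀ a, Commute (f a) (inl w)) :
    abelianRank A ≤ s + abelianRank (rightHom.comp f).ker := by
  obtain ⟨x, hx⟩ := nonempty_essentialLetters hw
  set φ : A →* H := rightHom.comp f
  set B : Subgroup A := (MulAction.stabilizer H x).comap φ
  have : B.FiniteIndex := finiteIndex_comap_stabilizer φ (finite_essentialLetters w)
    fun a => smul_mem_essentialLetters (hf a) hx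
  let ψ : B →* MulAction.stabilizer H x := φ.subgroupComap _
  let incl : ψ.ker →* φ.ker := (B.subtype.comp ψ.ker.subtype).codRestrict φ.ker fun b =>
    congrArg Subtype.val b.2
  have hincl : Function.Injective incl := fun _ _ h =>
    Subtype.ext (Subtype.ext (congrArg φ.ker.subtype h))
  calc abelianRank A ≤ abelianRank B := abelianRank_le_of_finiteIndex B
    _ ≤ s + abelianRank ψ.ker := (hs x).abelianRank_le_add_ker ψ
    _ ≤ s + abelianRank φ.ker := by gcongr; exact abelianRank_le_of_injective incl hincl

theorem exists_inl_eq_of_rightHom_eq_one {N G : Type*} [Group N] [Group G]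
    {φ : G →* MulAut N} {g : N ⋊[φ] G} (hg : rightHom g = 1) (hg1 : g ≠ 1) :
    ∃ n : N, n ≠ 1 ∧ inl n = g := by
  rw [← MonoidHom.mem_ker, ← range_inl_eq_ker_rightHom] at hg
  obtain ⟨n, rfl⟩ := hg
  exact ⟨n, ne_of_apply_ne inl (by rwa [map_one]), rfl⟩

theorem abelianRankLE_one_ker_rightHom :
    AbelianRankLE 1 (rightHom : FreeGroup X ⋊[permAut H X] H →* H).ker := by
  rw [← range_inl_eq_ker_rightHom]
  exact (abelianRankLE_one_freeGroup X).of_injective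
    (MonoidHom.ofInjective inl_injective).symm.toMonoidHom (MulEquiv.injective _)

theorem abelianRank_le_of_not_injective_rightHom_comp
    (hs : ∀ x : X, AbelianRankLE s (MulAction.stabilizer H x))
    {f : A →* FreeGroup X ⋊[permAut H X] H} (hf : Function.Injective f)
    (hright : ¬ Function.Injective (rightHom.comp f)) : abelianRank A ≤ s + 1 := by
  rw [injective_iff_map_eq_one] at hright
  push Not at hright
  obtain ⟨a, ha, ha1⟩ := hright
  obtain ⟨w, hw, hwa⟩ := exists_inl_eq_of_rightHom_eq_one ha ((map_ne_one_iff f hf).2 ha1)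
  have hcomm (b : A) : Commute (f b) (inl w) := hwa ▸ (Commute.all b a).map f
  calc abelianRank A ≤ s + abelianRank (rightHom.comp f).ker :=
        abelianRank_le_of_commute_inl hs hw f hcomm
    _ ≤ s + 1 := by
        gcongr
        exact_mod_cast abelianRankLE_one_ker_rightHom.abelianRank_ker_comp_le hf

theorem AbelianRankLE.semidirectProduct (hs : ∀ x : X, AbelianRankLE s (MulAction.stabilizer H x))
    (hH : AbelianRankLE (s + 1) H) : AbelianRankLE (s + 1) (FreeGroup X ⋊[permAut H X] H) := by
  intro A _ f hf
  by_cases hright : Function.Injective (rightHom.comp f)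
  · exact hH A _ hright
  · exact_mod_cast abelianRank_le_of_not_injective_rightHom_comp hs hf hright

/-- An element of `G` commuting with a subgroup of rank at least `q` of an abelian subgroup of rank
greater than `q` commutes with the whole abelian subgroup. As in `AbelianRankLE`, the abelian
subgroup is given by an injective homomorphism. -/
def Rigid (q : ℕ) (G : Type u) [Group G] : Prop :=
  ∀ (A : Type u) [CommGroup A] (f : A →* G) (L : Subgroup A) (y : G),
    Function.Injective f → q < abelianRank A → q ≤ abelianRank L →
    (∀ a ∈ L, Commute y (f a)) → ∀ a, Commute y (f a)

theorem Rigid.of_injective {G : Type u} [Group G] (h : Rigid q H) (f : G →* H)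
    (hf : Function.Injective f) : Rigid q G := by
  intro A _ j L y hj hA hL hy a
  refine Commute.of_map hf ?_
  exact h A (f.comp j) L (f y) (hf.comp hj) hA hL (fun b hb => (hy b hb).map f) a

theorem Rigid.semidirectProduct (hs : ∀ x : X, AbelianRankLE s (MulAction.stabilizer H x))
    (hH : Rigid (s + 1) H) : Rigid (s + 1) (FreeGroup X ⋊[permAut H X] H) := by
  intro A _ f L y hf hA hL hy a
  have hinj : Function.Injective (rightHom.comp f) := by
    by_contra h
    exact hA.not_ge (by exact_mod_cast abelianRank_le_of_not_injective_rightHom_comp hs hf h)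
  have hright : rightHom ⁅y, f a⁆ = 1 := by
    rw [map_commutatorElement, commutatorElement_eq_one_iff_commute]
    exact hH A _ L _ hinj hA hL (fun b hb => (hy b hb).map rightHom) a
  by_contra hya
  obtain ⟨w, hw, hwc⟩ := exists_inl_eq_of_rightHom_eq_one hright
    (mt commutatorElement_eq_one_iff_commute.1 hya)
  let fL : L →* FreeGroup X ⋊[permAut H X] H := f.comp L.subtype
  have hcomm (b : L) : Commute (fL b) (inl w) := by
    have hby : Commute (fL b) y := (hy b b.2).symm
    have hba : Commute (fL b) (f a) := (Commute.all (b : A) a).map f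
    rw [hwc, commutatorElement_def]
    exact ((hby.mul_right hba).mul_right hby.inv_right).mul_right hba.inv_right
  have hker : abelianRank (rightHom.comp fL).ker = 0 := by
    have : (rightHom.comp fL).ker = ⊥ :=
      (MonoidHom.ker_eq_bot_iff _).2 (hinj.comp L.subtype_injective)
    rw [this, abelianRank_eq_zero_of_finite]
  have hle : ((s + 1 : ℕ) : Cardinal) ≤ s := by
    simpa only [hker, add_zero] using hL.trans (abelianRank_le_of_commute_inl hs hw fL hcomm)
  exact absurd (Nat.cast_le.1 hle) s.not_succ_le_self

end PermutationSemidirectProduct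

namespace RAAG

open PresentedGroup (of)
open SemidirectProduct

variable {V W : Type} {Γ : SimpleGraph V} {Δ : SimpleGraph W} {G : Type*} [Group G]

theorem commute_of_adj {u v : V} (h : Γ.Adj u v) : Commute (of u : RAAG Γ) (of v) := by
  have hrel : PresentedGroup.mk (raagRels Γ)
      (FreeGroup.of u * FreeGroup.of v * (FreeGroup.of u)⁻¹ * (FreeGroup.of v)⁻¹) = 1 :=
    PresentedGroup.one_of_mem ⟨u, v, h, rfl⟩
  rwa [map_mul, map_mul, map_mul, map_inv, map_inv, mul_inv_eq_one, mul_inv_eq_iff_eq_mul] at hrel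

/-- The universal property of `RAAG Γ`: a map on the vertices sending adjacent vertices to commuting
elements extends to a homomorphism. -/
def lift (f : V → G) (hf : ∀ u v, Γ.Adj u v → Commute (f u) (f v)) : RAAG Γ →* G :=
  PresentedGroup.toGroup (f := f) <| by
    rintro _ ⟨u, v, huv, rfl⟩
    simp only [map_mul, map_inv, FreeGroup.lift_apply_of]
    rw [mul_inv_eq_one, mul_inv_eq_iff_eq_mul]
    exact hf u v huv

theorem lift_of (f : V → G) (hf : ∀ u v, Γ.Adj u v → Commute (f u) (f v)) (v : V) :
    lift f hf (of v) = f v :=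
  PresentedGroup.toGroup.of _

/-- The homomorphism of right-angled Artin groups induced by an embedding of graphs. -/
def map (e : Γ ↪g Δ) : RAAG Γ →* RAAG Δ :=
  lift (fun v => of (e v)) fun _ _ h => commute_of_adj (e.map_adj_iff.2 h)

theorem map_of (e : Γ ↪g Δ) (v : V) : map e (of v) = of (e v) :=
  lift_of _ _ v

theorem injective_of_leftInverse_of {f : RAAG Γ →* G} (r : G →* RAAG Γ)
    (h : ∀ v, r (f (of v)) = of v) : Function.Injective f :=
  Function.LeftInverse.injective <| DFunLike.congr_fun <|
    PresentedGroup.ext (φ := r.comp f) (ψ := .id _) h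

theorem map_injective (e : Γ ↪g Δ) : Function.Injective (map e) := by
  classical
  let retract : W → RAAG Γ := Function.extend e of 1
  have hretract (v : V) : retract (e v) = of v := e.injective.extend_apply _ _ v
  refine injective_of_leftInverse_of (lift retract fun a b hab => ?_) fun v => ?_
  · by_cases ha : ∃ u, e u = a
    · by_cases hb : ∃ v, e v = b
      · obtain ⟨u, rfl⟩ := ha
        obtain ⟨v, rfl⟩ := hb
        rw [hretract, hretract]
        exact commute_of_adj (e.map_adj_iff.1 hab)
      · rw [show retract b = 1 from Function.extend_apply' _ _ _ hb]
        exact .one_right _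
    · rw [show retract a = 1 from Function.extend_apply' _ _ _ ha]
      exact .one_left _
  · rw [map_of, lift_of, hretract]

theorem commute_of_forall_commute_of {f : RAAG Γ →* G} {y : G} (h : ∀ v, Commute y (f (of v)))
    (x : RAAG Γ) : Commute y (f x) := by
  have hx : x ∈ (Subgroup.centralizer {y}).comap f :=
    PresentedGroup.generated_by _ ((Subgroup.centralizer {y}).comap f)
      (fun v => Subgroup.mem_centralizer_singleton_iff.2 (h v).symm.eq) x
  exact Commute.symm (Subgroup.mem_centralizer_singleton_iff.1 hx)

theorem commute_of_isClique_univ (h : Γ.IsClique Set.univ) (x y : RAAG Γ) : Commute x y := by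
  have hof (u v : V) : Commute (of u : RAAG Γ) (of v) := by
    obtain rfl | huv := eq_or_ne u v
    · exact .refl _
    · exact commute_of_adj (h trivial trivial huv)
  refine commute_of_forall_commute_of (f := .id _) (fun v => Commute.symm ?_) y
  exact commute_of_forall_commute_of (f := .id _) (hof v) x

theorem commute_of_iff {u v : V} :
    Commute (of u : RAAG Γ) (of v) ↔ u = v ∨ Γ.Adj u v := by
  classical
  refine ⟨fun h => ?_, ?_⟩
  · by_contra! huv
    let f : V → FreeGroup V := fun w => if w = u ∨ w = v then .of w else 1
    have hf (a b : V) (hab : Γ.Adj a b) : Commute (f a) (f b) := by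
      by_cases ha : a = u ∨ a = v
      · by_cases hb : b = u ∨ b = v
        · grind [SimpleGraph.adj_comm, SimpleGraph.irrefl]
        · rw [show f b = 1 from if_neg hb]
          exact .one_right _
      · rw [show f a = 1 from if_neg ha]
        exact .one_left _
    have hcomm := h.map (lift f hf)
    rw [lift_of, lift_of, show f u = .of u from if_pos (.inl rfl),
      show f v = .of v from if_pos (.inr rfl), commute_freeGroup_of_iff] at hcomm
    exact huv.1 hcomm
  · rintro (rfl | h)
    · exact .refl _
    · exact commute_of_adj h

section Deletion

variable (Γ : SimpleGraph V) (v : V)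

/-- The right-angled Artin group on the vertices other than `v`. -/
abbrev Deletion : Type := RAAG (Γ.induce {v}ᶜ)

/-- The inclusion of the right-angled Artin group on the vertices other than `v`. -/
def deletionHom : Deletion Γ v →* RAAG Γ := map (Embedding.induce {v}ᶜ)

theorem neighborSet_subset_compl_singleton : Γ.neighborSet v ⊆ {v}ᶜ :=
  Set.subset_compl_singleton_iff.2 Γ.notMem_neighborSet_self

/-- The inclusion of the right-angled Artin group on the link of `v`. -/
def linkHom : RAAG (Γ.induce (Γ.neighborSet v)) →* Deletion Γ v :=
  map (Γ.induceHomOfLE (neighborSet_subset_compl_singleton Γ v))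

theorem commute_deletionHom_of_mem_range_linkHom {k : Deletion Γ v} (hk : k ∈ (linkHom Γ v).range) :
    Commute (deletionHom Γ v k) (of v) := by
  obtain ⟨x, rfl⟩ := hk
  refine (commute_of_forall_commute_of (f := (deletionHom Γ v).comp (linkHom Γ v)) ?_ x).symm
  intro w
  rw [MonoidHom.comp_apply, linkHom, deletionHom, map_of, map_of]
  exact commute_of_adj w.2

/-- A semidirect product containing `RAAG Γ`, in which `H`, the right-angled Artin group on the
vertices other than `v`, acts on the free group over the cosets of the subgroup generated by the
link of `v`. The basis element of the coset `h K` stands for the conjugate of `v` by `h`; in fact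
the model is isomorphic to `RAAG Γ`. -/
abbrev Model : Type :=
  FreeGroup (Deletion Γ v ⧸ (linkHom Γ v).range)
    ⋊[permAut (Deletion Γ v) (Deletion Γ v ⧸ (linkHom Γ v).range)] Deletion Γ v

/-- The element of the model corresponding to the generator `v` of `RAAG Γ`. -/
def stableLetter : Model Γ v :=
  inl (.of ((1 : Deletion Γ v) : Deletion Γ v ⧸ (linkHom Γ v).range))

theorem commute_stableLetter_inr_of {w : V} (hw : w ∈ ({v}ᶜ : Set V)) (hvw : Γ.Adj v w) :
    Commute (stableLetter Γ v) (inr (of ⟨w, hw⟩)) := by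
  have hlink : (of ⟨w, hw⟩ : Deletion Γ v) ∈ (linkHom Γ v).range := ⟨of ⟨w, hvw⟩, map_of _ _⟩
  have hfix : (of ⟨w, hw⟩ : Deletion Γ v) • ((1 : Deletion Γ v) : _ ⧸ (linkHom Γ v).range) =
      (1 : Deletion Γ v) := by
    rw [← MulAction.mem_stabilizer_iff, MulAction.stabilizer_quotient]
    exact hlink
  refine Commute.symm (mul_inv_eq_iff_eq_mul.1 ?_)
  rw [stableLetter, ← map_inv, ← inl_aut, permAut_apply_of, hfix]

open Classical in
/-- The embedding of `RAAG Γ` in the model. -/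
noncomputable def toModel : RAAG Γ →* Model Γ v :=
  lift (fun w => if h : w = v then stableLetter Γ v else inr (of ⟨w, h⟩)) <| by
    intro a b hab
    split_ifs with ha hb hb
    · exact .refl _
    · exact commute_stableLetter_inr_of Γ v hb (ha ▸ hab)
    · exact (commute_stableLetter_inr_of Γ v ha (hb ▸ hab.symm)).symm
    · exact (commute_of_adj (Γ := Γ.induce {v}ᶜ) (u := ⟨a, ha⟩) (v := ⟨b, hb⟩) hab).map inr

/-- The conjugate of the generator `v` by the elements of a coset of the link subgroup. -/
def conjugateOfCoset : Deletion Γ v ⧸ (linkHom Γ v).range → RAAG Γ :=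
  Quotient.lift (fun g => MulAut.conj (deletionHom Γ v g) (of v)) <| by
    intro g h hgh
    have hcomm := commute_deletionHom_of_mem_range_linkHom Γ v (QuotientGroup.leftRel_apply.1 hgh)
    have hfix : MulAut.conj (deletionHom Γ v (g⁻¹ * h)) (of v) = of v := by
      rw [MulAut.conj_apply, hcomm.eq, mul_inv_cancel_right]
    rw [← mul_inv_cancel_left g h, map_mul, map_mul, MulAut.mul_apply, hfix]

/-- The retraction of the model onto `RAAG Γ`. -/
def fromModel : Model Γ v →* RAAG Γ :=
  SemidirectProduct.lift (FreeGroup.lift (conjugateOfCoset Γ v)) (deletionHom Γ v) <| by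
    intro h
    ext ⟨g⟩
    change FreeGroup.lift (conjugateOfCoset Γ v) (permAut _ _ h (.of (g : Deletion Γ v ⧸ _))) =
      MulAut.conj (deletionHom Γ v h) (FreeGroup.lift (conjugateOfCoset Γ v) (.of (g : _ ⧸ _)))
    rw [permAut_apply_of, FreeGroup.lift_apply_of, FreeGroup.lift_apply_of]
    change MulAut.conj (deletionHom Γ v (h * g)) (of v) =
      MulAut.conj (deletionHom Γ v h) (MulAut.conj (deletionHom Γ v g) (of v))
    rw [map_mul, map_mul, MulAut.mul_apply]

theorem toModel_injective : Function.Injective (toModel Γ v) := by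
  refine injective_of_leftInverse_of (fromModel Γ v) fun w => ?_
  rw [toModel, lift_of]
  split_ifs with hw
  · rw [fromModel, stableLetter, lift_inl, FreeGroup.lift_apply_of, hw]
    change MulAut.conj (deletionHom Γ v 1) (of v) = of v
    rw [map_one, map_one, MulAut.one_apply]
  · rw [fromModel, lift_inr, deletionHom, map_of]
    rfl

theorem abelianRankLE_stabilizer {s : ℕ} (h : AbelianRankLE s (RAAG (Γ.induce (Γ.neighborSet v))))
    (x : Deletion Γ v ⧸ (linkHom Γ v).range) :
    AbelianRankLE s (MulAction.stabilizer (Deletion Γ v) x) := by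
  refine AbelianRankLE.stabilizer_quotient ?_ x
  exact h.of_injective (MonoidHom.ofInjective (map_injective _)).symm.toMonoidHom
    (MulEquiv.injective _)

end Deletion

theorem abelianRankLE_of_cliqueFree {V : Type} [Finite V] {Γ : SimpleGraph V} {r : ℕ}
    (h : Γ.CliqueFree (r + 1)) : AbelianRankLE r (RAAG Γ) := by
  cases isEmpty_or_nonempty V with
  | inl hV =>
    intro A _ f hf
    have htrivial (x : RAAG Γ) : x = 1 := PresentedGroup.generated_by _ ⊥ hV.elim x
    have : Subsingleton A := ⟨fun a b => hf ((htrivial _).trans (htrivial _).symm)⟩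
    rw [abelianRank_eq_zero_of_finite]
    exact zero_le
  | inr hV =>
    obtain ⟨v⟩ := hV
    obtain _ | s := r
    · exact (cliqueFree_one.1 h).elim v
    have hdeletion : AbelianRankLE (s + 1) (Deletion Γ v) :=
      abelianRankLE_of_cliqueFree ((cliqueFree_induce_iff _ _ _).2 h.cliqueFreeOn)
    have hlink : AbelianRankLE s (RAAG (Γ.induce (Γ.neighborSet v))) := by
      refine abelianRankLE_of_cliqueFree ((cliqueFree_induce_iff _ _ _).2 ?_)
      simpa only [Set.univ_inter] using ((cliqueFreeOn_univ Γ).2 h).of_succ Γ (Set.mem_univ v)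
    exact (AbelianRankLE.semidirectProduct (abelianRankLE_stabilizer Γ v hlink)
      hdeletion).of_injective _ (toModel_injective Γ v)
termination_by Nat.card V
decreasing_by all_goals exact Finite.card_subtype_lt (x := v) (by simp)

theorem rigid_of_isClique {V : Type} [Finite V] {Γ : SimpleGraph V} {q : ℕ} {T : Set V}
    (hT : Γ.IsClique T) (hlink : ∀ v ∉ T, Γ.CliqueFreeOn (Γ.neighborSet v) q) :
    Rigid q (RAAG Γ) := by
  by_cases hv : ∃ v, v ∉ T
  · obtain ⟨v, hv⟩ := hv
    obtain _ | s := q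
    · exact absurd (by simp) (hlink v hv (t := ∅) (by simp))
    have hdeletion : Rigid (s + 1) (Deletion Γ v) := by
      refine rigid_of_isClique (T := Subtype.val ⁻¹' T) ?_ fun w hw t htw ht => ?_
      · exact fun a ha b hb hab => hT ha hb (Subtype.coe_ne_coe.2 hab)
      · refine hlink w hw ?_ ((isNClique_induce_iff _ _ _).1 ht)
        rw [Finset.coe_map]
        exact Set.image_subset_iff.2 htw
    have hstabilizer := abelianRankLE_stabilizer Γ v <|
      abelianRankLE_of_cliqueFree ((cliqueFree_induce_iff _ _ _).2 (hlink v hv))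
    exact (Rigid.semidirectProduct hstabilizer hdeletion).of_injective _ (toModel_injective Γ v)
  · push Not at hv
    exact fun A _ f L y _ _ _ _ a =>
      commute_of_isClique_univ (hT.subset fun v _ => hv v) y (f a)
termination_by Nat.card V
decreasing_by exact Finite.card_subtype_lt (x := v) (by simp)

section Clique

variable {ι : Type} (c : completeGraph ι ↪g Γ)

theorem pairwise_commute_zpowersHom : Pairwise fun i j => ∀ m n : Multiplicative ℤ,
    Commute (zpowersHom (RAAG Γ) (of (c i)) m) (zpowersHom (RAAG Γ) (of (c j)) n) :=
  fun _ _ hij _ _ => (commute_of_adj (c.map_adj_iff.2 hij)).zpow_zpow _ _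

variable [Fintype ι]

/-- The homomorphism from the free abelian group on `ι` sending the basis to the generators in a
clique. -/
noncomputable def cliqueHom : (ι → Multiplicative ℤ) →* RAAG Γ :=
  MonoidHom.noncommPiCoprod _ (pairwise_commute_zpowersHom c)

theorem cliqueHom_mulSingle [DecidableEq ι] (i : ι) (n : Multiplicative ℤ) :
    cliqueHom c (Pi.mulSingle i n) = of (c i) ^ n.toAdd :=
  MonoidHom.noncommPiCoprod_mulSingle _ _ _

theorem cliqueHom_injective : Function.Injective (cliqueHom c) := by
  classical
  let coord : RAAG Γ →* (ι → Multiplicative ℤ) :=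
    lift (Function.extend c (fun i => Pi.mulSingle i (.ofAdd 1)) 1) fun _ _ _ => .all _ _
  have hcoord : coord.comp (cliqueHom c) = .id _ := by
    refine MonoidHom.functions_ext _ _ _ fun i n => ?_
    rw [MonoidHom.comp_apply, cliqueHom_mulSingle, map_zpow, lift_of,
      c.injective.extend_apply, ← Pi.mulSingle_zpow, ← ofAdd_zsmul]
    simp
  exact Function.LeftInverse.injective (DFunLike.congr_fun hcoord)

theorem commute_cliqueHom {y : RAAG Γ} {a : ι → Multiplicative ℤ}
    (h : ∀ i, a i ≠ 1 → Commute y (of (c i))) : Commute y (cliqueHom c a) := by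
  rw [cliqueHom, MonoidHom.noncommPiCoprod_apply]
  refine Finset.noncommProd_commute _ _ _ _ fun i _ => ?_
  obtain hi | hi := eq_or_ne (a i) 1
  · rw [hi, map_one]
    exact .one_right _
  · exact (h i hi).zpow_right _

theorem abelianRankLE_iff_cliqueFree [Finite V] {r : ℕ} :
    AbelianRankLE r (RAAG Γ) ↔ Γ.CliqueFree (r + 1) := by
  refine ⟨fun h => ?_, abelianRankLE_of_cliqueFree⟩
  by_contra hclique
  have hrank := h _ _ (cliqueHom_injective (topEmbeddingOfNotCliqueFree hclique))
  rw [abelianRank_pi_multiplicative_int, Fintype.card_fin, Nat.cast_le] at hrank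
  exact absurd hrank r.not_succ_le_self

theorem commute_of_rigid {q : ℕ} (h : Rigid q (RAAG Γ)) (hι : q < Fintype.card ι) {i : ι} {u : V}
    (hu : ∀ j ≠ i, Γ.Adj u (c j)) : Commute (of u : RAAG Γ) (of (c i)) := by
  classical
  let proj : (ι → Multiplicative ℤ) →* Multiplicative ℤ := Pi.evalMonoidHom _ i
  have hker : (q : Cardinal) ≤ abelianRank proj.ker := by
    have hsum : ((q + 1 : ℕ) : Cardinal) ≤ 1 + abelianRank proj.ker := by
      calc ((q + 1 : ℕ) : Cardinal) ≤ Fintype.card ι := Nat.cast_le.2 hι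
        _ = abelianRank (ι → Multiplicative ℤ) := (abelianRank_pi_multiplicative_int ι).symm
        _ ≤ abelianRank (Multiplicative ℤ) + abelianRank proj.ker := abelianRank_le_add_ker proj
        _ ≤ 1 + abelianRank proj.ker := by gcongr; exact abelianRank_le_one_of_isCyclic
    rw [Nat.cast_succ, add_comm 1] at hsum
    exact Cardinal.add_one_le_add_one_iff.1 hsum
  have hcomm : Commute (of u) (cliqueHom c (Pi.mulSingle i (.ofAdd 1))) := by
    refine h _ (cliqueHom c) proj.ker _ (cliqueHom_injective c) ?_ hker (fun a ha => ?_) _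
    · rw [abelianRank_pi_multiplicative_int]
      exact_mod_cast hι
    · refine commute_cliqueHom c fun j hj => commute_of_adj (hu j ?_)
      rintro rfl
      exact hj ha
  simpa [cliqueHom_mulSingle] using hcomm

end Clique

end RAAG

section Path

open PresentedGroup (of)

theorem pathGraph_compl_adj {n : ℕ} {x y : Fin n} :
    (pathGraph n)ᶜ.Adj x y ↔ x.val + 1 < y.val ∨ y.val + 1 < x.val := by
  rw [compl_adj, pathGraph_adj, ne_eq, Fin.ext_iff]
  omega

/-- The inclusion of the complement of a path as that of an initial segment of a longer path. -/
def pathGraphComplEmbedding {m n : ℕ} (h : m ≤ n) : (pathGraph m)ᶜ ↪g (pathGraph n)ᶜ where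
  toEmbedding := Fin.castLEEmb h
  map_rel_iff' := by
    simp only [pathGraph_compl_adj, Fin.castLEEmb_apply, Fin.val_castLE, implies_true]

/-- The clique formed by every other vertex in the complement of a path, starting at the vertex
`a`. -/
def everyOtherClique {n k : ℕ} (a : ℕ) (h : 2 * k + a < n + 2) :
    completeGraph (Fin k) ↪g (pathGraph n)ᶜ where
  toFun i := ⟨2 * i + a, by omega⟩
  inj' i j hij := by simpa [Fin.ext_iff] using hij
  map_rel_iff' {i j} := by
    change (pathGraph n)ᶜ.Adj ⟨2 * i + a, _⟩ ⟨2 * j + a, _⟩ ↔ i ≠ j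
    rw [pathGraph_compl_adj, ne_eq, Fin.ext_iff]
    dsimp only
    omega

theorem val_everyOtherClique {n k a : ℕ} (h : 2 * k + a < n + 2) (i : Fin k) :
    (everyOtherClique a h i).val = 2 * i + a :=
  rfl

theorem cliqueFree_pathGraph_compl {k : ℕ} : (pathGraph (2 * k))ᶜ.CliqueFree (k + 1) := by
  have hcolor : (pathGraph (2 * k))ᶜ.Colorable k :=
    ⟨.mk (fun x => ⟨x / 2, by omega⟩) fun {x y} hxy => by
      rw [pathGraph_compl_adj] at hxy
      rw [ne_eq, Fin.mk.injEq]
      omega⟩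
  exact hcolor.cliqueFree k.lt_succ_self

theorem not_injective_pathGraph_even {k : ℕ}
    (φ : GG (pathGraph (2 * k + 1)) →* GG (pathGraph (2 * k))) : ¬ Function.Injective φ := by
  intro hφ
  have hrank : AbelianRankLE k (GG (pathGraph (2 * k + 1))) :=
    (RAAG.abelianRankLE_iff_cliqueFree.2 cliqueFree_pathGraph_compl).of_injective φ hφ
  let evenClique : completeGraph (Fin (k + 1)) ↪g (pathGraph (2 * k + 1))ᶜ :=
    everyOtherClique 0 (by omega)
  exact evenClique.isContained.not_cliqueFree (RAAG.abelianRankLE_iff_cliqueFree.1 hrank)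

theorem cliqueFreeOn_neighborSet_pathGraph_compl {q : ℕ} {v : Fin (2 * q + 1)}
    (hv : v.val % 2 = 1) :
    (pathGraph (2 * q + 1))ᶜ.CliqueFreeOn ((pathGraph (2 * q + 1))ᶜ.neighborSet v) q := by
  -- The colour classes `{0, 1}, …, {v - 3, v - 2}` and `{v + 2, v + 3}, …` have size two.
  have hcolor : ((pathGraph (2 * q + 1))ᶜ.induce
      ((pathGraph (2 * q + 1))ᶜ.neighborSet v)).Colorable (q - 1) :=
    ⟨.mk (fun x => ⟨if x.1 < v then x.1 / 2 else (x.1 - 3) / 2, by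
        have hx := pathGraph_compl_adj.1 x.2
        split_ifs <;> omega⟩) fun {x y} hxy => by
      have hx := pathGraph_compl_adj.1 x.2
      have hy := pathGraph_compl_adj.1 y.2
      rw [induce_adj, pathGraph_compl_adj] at hxy
      rw [ne_eq, Fin.mk.injEq]
      split_ifs <;> omega⟩
  exact (cliqueFree_induce_iff _ _ _).1 (hcolor.cliqueFree (by omega))

theorem rigid_pathGraph_odd (q : ℕ) : Rigid q (GG (pathGraph (2 * q + 1))) := by
  refine RAAG.rigid_of_isClique (T := {v | v.val % 2 = 0}) ?_ fun v hv =>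
    cliqueFreeOn_neighborSet_pathGraph_compl (Nat.mod_two_ne_zero.1 hv)
  intro x hx y hy hxy
  rw [pathGraph_compl_adj]
  rw [ne_eq, Fin.ext_iff] at hxy
  rw [Set.mem_ofPred_eq] at hx hy
  omega

theorem not_injective_pathGraph_odd {q : ℕ}
    (φ : GG (pathGraph (2 * q + 2)) →* GG (pathGraph (2 * q + 1))) : ¬ Function.Injective φ := by
  intro hφ
  have hrigid : Rigid q (GG (pathGraph (2 * q + 2))) := (rigid_pathGraph_odd q).of_injective φ hφ
  let oddClique : completeGraph (Fin (q + 1)) ↪g (pathGraph (2 * q + 2))ᶜ :=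
    everyOtherClique 1 (by omega)
  have hadj (j : Fin (q + 1)) (hj : j ≠ 0) : (pathGraph (2 * q + 2))ᶜ.Adj 0 (oddClique j) := by
    rw [pathGraph_compl_adj, val_everyOtherClique, Fin.val_zero]
    have := Fin.val_ne_zero_iff.2 hj
    omega
  have hcomm : Commute (of 0 : GG (pathGraph (2 * q + 2))) (of (oddClique 0)) :=
    RAAG.commute_of_rigid oddClique hrigid (by simp) hadj
  rw [RAAG.commute_of_iff, pathGraph_compl_adj, Fin.ext_iff, val_everyOtherClique] at hcomm
  simp only [Fin.val_zero] at hcomm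
  omega

end Path

/-- `G(P_m) ↪ G(P_n)` iff `m ≤ n`. -/
theorem statement3 (m n : ℕ) (hm : 0 < m) (hn : 0 < n) :
    (∃ φ : GG (pathGraph m) →* GG (pathGraph n), Function.Injective φ) ↔ m ≤ n := by
  refine ⟨?_, fun h => ⟨RAAG.map (pathGraphComplEmbedding h), RAAG.map_injective _⟩⟩
  rintro ⟨φ, hφ⟩
  by_contra! hlt
  have hinj := hφ.comp (RAAG.map_injective (pathGraphComplEmbedding hlt))
  obtain ⟨k, rfl | rfl⟩ := n.even_or_odd'
  · exact not_injective_pathGraph_even (φ.comp (RAAG.map _)) hinj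
  · exact not_injective_pathGraph_odd (φ.comp (RAAG.map _)) hinj
end
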